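/- arXiv:2508.04439 — 2 statements merged into one kernel-verified Lean document; each statement's English description precedes it below -/
import Mathlib

section
/- Suppose in addition that each f_j is homogeneous of degree e_j, and set d = e_1 + ⋯ + e_m. Then for every j with 1 ≤ j ≤ m one has the identity ρ_j × (x,y,z) = d·(∏_{k≠j} f_k)·∇f_j − e_j·∇f in S³. (This is the statement that the contraction of the 2-form ω_j along the Euler vector field equals d·(f/f_j)·df_j − e_j·df.) -/
open MvPolynomial

noncomputable abbrev S : Type := MvPolynomial (Fin 3) ℂ

/-- The gradient `∇g = (g_x, g_y, g_z)` of a polynomial `g ∈ S = ℂ[x,y,z]`. -/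
noncomputable def grad (g : S) : Fin 3 → S := fun t => pderiv t g

/-- The syzygy triple `ρ_j = Σ_{i≠j} (∏_{k≠i,j} f_k) (∇f_i × ∇f_j)`
of the 2-form `ω_j = df ∧ df_j/f_j`. -/
noncomputable def rho {m : ℕ} (F : Fin m → S) (j : Fin m) : Fin 3 → S :=
  ∑ i ∈ Finset.univ.erase j,
    (∏ k ∈ (Finset.univ.erase j).erase i, F k) • crossProduct (grad (F i)) (grad (F j))

/-
Since `∇` obeys the Leibniz rule, the sum defining `ρ_j` collapses to `∇g × ∇f_j` with
`g = ∏_{k≠j} f_k`. The vector triple product `(u × v) × w = (u ⬝ w) v - (v ⬝ w) u` at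
`w = (x,y,z)`, together with Euler's identity for `g` (of degree `d - e_j`) and `f_j`, gives
`(d - e_j) g ∇f_j - e_j f_j ∇g`, which is the claim because `∇f = f_j ∇g + g ∇f_j`.
-/

open scoped Matrix

theorem derivation_prod {R A M ι : Type*} [CommSemiring R] [CommSemiring A] [AddCommMonoid M]
    [Algebra R A] [Module A M] [Module R M] [DecidableEq ι]
    (D : Derivation R A M) (s : Finset ι) (f : ι → A) :
    D (∏ i ∈ s, f i) = ∑ i ∈ s, (∏ k ∈ s.erase i, f k) • D (f i) := by
  induction s using Finset.induction_on with
  | empty => simp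
  | insert a s ha ih =>
    have prod_erase_insert (i : ι) (hi : i ∈ s) :
        ∏ k ∈ (insert a s).erase i, f k = f a * ∏ k ∈ s.erase i, f k := by
      rw [Finset.erase_insert_of_ne (ne_of_mem_of_not_mem hi ha).symm,
        Finset.prod_insert (mt Finset.mem_of_mem_erase ha)]
    calc D (∏ i ∈ insert a s, f i)
        = (∏ i ∈ s, f i) • D (f a) + f a • ∑ i ∈ s, (∏ k ∈ s.erase i, f k) • D (f i) := by
          rw [Finset.prod_insert ha, Derivation.leibniz, ih, add_comm]
      _ = (∏ i ∈ s, f i) • D (f a) + ∑ i ∈ s, (∏ k ∈ (insert a s).erase i, f k) • D (f i) := by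
          rw [Finset.smul_sum]
          congr 1
          exact Finset.sum_congr rfl fun i hi => by rw [prod_erase_insert i hi, mul_smul]
      _ = ∑ i ∈ insert a s, (∏ k ∈ (insert a s).erase i, f k) • D (f i) := by
          rw [Finset.sum_insert ha, Finset.erase_insert ha]

section Gradient

variable {σ R : Type*} [CommSemiring R]

/-- The gradient of a polynomial over any coefficient semiring, in any set of variables;
`grad` is definitionally its instance for `ℂ[x,y,z]`. -/
noncomputable def formalGrad (p : MvPolynomial σ R) : σ → MvPolynomial σ R :=
  fun t => pderiv t p

theorem formalGrad_mul (p q : MvPolynomial σ R) :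
    formalGrad (p * q) = p • formalGrad q + q • formalGrad p :=
  funext fun t => (pderiv t).leibniz p q

theorem formalGrad_prod {ι : Type*} [DecidableEq ι] (s : Finset ι) (f : ι → MvPolynomial σ R) :
    formalGrad (∏ i ∈ s, f i) = ∑ i ∈ s, (∏ k ∈ s.erase i, f k) • formalGrad (f i) := by
  ext1 t
  simpa only [Finset.sum_apply, Pi.smul_apply, formalGrad] using derivation_prod (pderiv t) s f

theorem formalGrad_dotProduct_X [Fintype σ] {p : MvPolynomial σ R} {n : ℕ}
    (hp : p.IsHomogeneous n) : formalGrad p ⬝ᵥ X = n • p := by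
  rw [dotProduct_comm]
  exact hp.sum_X_mul_pderiv

end Gradient

section CrossProduct

variable {R : Type*} [CommRing R]

theorem formalGrad_cross_formalGrad_cross_X {p q : MvPolynomial (Fin 3) R} {a b : ℕ}
    (hp : p.IsHomogeneous a) (hq : q.IsHomogeneous b) :
    formalGrad p ⨯₃ formalGrad q ⨯₃ X = (a + b) • p • formalGrad q - b • formalGrad (p * q) := by
  calc formalGrad p ⨯₃ formalGrad q ⨯₃ X
      = (a • p) • formalGrad q - (b • q) • formalGrad p := by
        rw [cross_cross_eq_smul_sub_smul, formalGrad_dotProduct_X hp, formalGrad_dotProduct_X hq]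
    _ = (a + b) • p • formalGrad q - b • formalGrad (p * q) := by
        rw [formalGrad_mul]
        module

/-- The triple `ρ_j` of a family of polynomials in three variables indexed by a finite set `s`,
over any coefficient ring; `rho` is definitionally the case `s = Finset.univ` over `ℂ`. -/
noncomputable def syzygyTriple {ι : Type*} [DecidableEq ι] (s : Finset ι)
    (f : ι → MvPolynomial (Fin 3) R) (j : ι) : Fin 3 → MvPolynomial (Fin 3) R :=
  ∑ i ∈ s.erase j, (∏ k ∈ (s.erase j).erase i, f k) • formalGrad (f i) ⨯₃ formalGrad (f j)

theorem syzygyTriple_eq_formalGrad_prod_erase_cross {ι : Type*} [DecidableEq ι] (s : Finset ι)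
    (f : ι → MvPolynomial (Fin 3) R) (j : ι) :
    syzygyTriple s f j = formalGrad (∏ k ∈ s.erase j, f k) ⨯₃ formalGrad (f j) := by
  simp only [syzygyTriple, formalGrad_prod, map_sum, map_smul, LinearMap.sum_apply,
    LinearMap.smul_apply]

theorem rho_cross_euler_general {ι : Type*} [DecidableEq ι] {s : Finset ι}
    {f : ι → MvPolynomial (Fin 3) R} {e : ι → ℕ} (hf : ∀ i ∈ s, (f i).IsHomogeneous (e i))
    {j : ι} (hj : j ∈ s) :
    syzygyTriple s f j ⨯₃ X
      = (∑ i ∈ s, e i) • (∏ k ∈ s.erase j, f k) • formalGrad (f j)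
        - e j • formalGrad (∏ i ∈ s, f i) := by
  have prod_erase_homogeneous :
      (∏ k ∈ s.erase j, f k).IsHomogeneous (∑ k ∈ s.erase j, e k) :=
    IsHomogeneous.prod _ f e fun k hk => hf k (Finset.mem_of_mem_erase hk)
  rw [syzygyTriple_eq_formalGrad_prod_erase_cross,
    formalGrad_cross_formalGrad_cross_X prod_erase_homogeneous (hf j hj),
    Finset.sum_erase_add s e hj, Finset.prod_erase_mul s f hj]

end CrossProduct

/-- if each `f_j` is homogeneous of degree `e_j` and `d = e_1 + ⋯ + e_m`, then
`ρ_j × (x,y,z) = d ⋅ (∏_{k≠j} f_k) ⋅ ∇f_j − e_j ⋅ ∇f` (contraction along the Euler field). -/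
theorem rho_cross_euler (m : ℕ) (hm : 2 ≤ m) (F : Fin m → S) (e : Fin m → ℕ)
    (hhom : ∀ j, (F j).IsHomogeneous (e j)) (j : Fin m) :
    crossProduct (rho F j) (fun t => (X t : S))
      = (∑ i, e i) • ((∏ k ∈ Finset.univ.erase j, F k) • grad (F j))
        - (e j) • grad (∏ i, F i) :=
  rho_cross_euler_general (fun i _ => hhom i) (Finset.mem_univ j)
end

section
/- Assume ℓ(C) = 1 with f_1 = x (so e_1 = 1 and e_j ≥ 2 for j ≥ 2). Then the S-module D₀(f) is generated by the set G = {ρ_1, ..., ρ_{m−1}, σ^y, σ^z}, and G is a minimal generating set: no element of G lies in the S-submodule of S³ generated by the other m elements of G. In particular C is an (m+1)-syzygy curve with exponents d_1 = ⋯ = d_{m−1} = d−2 and d_m = d_{m+1} = d−1. -/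
open MvPolynomial

/-- The Jacobian syzygy module `D₀(f) = {(a,b,c) ∈ S³ : a f_x + b f_y + c f_z = 0}`. -/
noncomputable def D0 (f : S) : Submodule S (Fin 3 → S) where
  carrier := {v | ∑ t, v t * pderiv t f = 0}
  add_mem' {a b} ha hb := by
    simp only [Set.mem_setOf_eq, Pi.add_apply, add_mul, Finset.sum_add_distrib] at *
    rw [ha, hb, add_zero]
  zero_mem' := by simp
  smul_mem' c v hv := by
    simp only [Set.mem_setOf_eq, Pi.smul_apply, smul_eq_mul, mul_assoc, ← Finset.mul_sum] at *
    rw [hv, mul_zero]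

/-- The syzygy triple `σ^x = (0, f_z, −f_y)` of the 2-form `df ∧ dx`. -/
noncomputable def sigx (f : S) : Fin 3 → S := ![0, pderiv 2 f, -pderiv 1 f]
/-- The syzygy triple `σ^y = (−f_z, 0, f_x)` of the 2-form `df ∧ dy`. -/
noncomputable def sigy (f : S) : Fin 3 → S := ![-pderiv 2 f, 0, pderiv 0 f]
/-- The syzygy triple `σ^z = (f_y, −f_x, 0)` of the 2-form `df ∧ dz`. -/
noncomputable def sigz (f : S) : Fin 3 → S := ![pderiv 1 f, -pderiv 0 f, 0]

/-- The candidate generating set `G = {ρ_1, …, ρ_{m−1}, σ^y, σ^z}` (case `ℓ(C) = 1`). -/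
noncomputable def G1 {m : ℕ} (F : Fin m → S) : (Fin (m - 1) ⊕ Fin 2) → (Fin 3 → S) :=
  Sum.elim (fun j => rho F (Fin.castLE (Nat.sub_le m 1) j))
    ![sigy (∏ i, F i), sigz (∏ i, F i)]

/-!
Contraction with the Euler field turns a syzygy `v` of `f` into the `1`-form `w = X × v`, and
`∇f × w` is a multiple of `f`, so `w / f` is a logarithmic form along the arrangement. Smoothness
and normal crossings make the ideals that measure residues modulo each `F i` vanish only at the
origin; by the Nullstellensatz they have grade at least two, so every residue is a polynomial and
`w = f • (∑ i, r i • dFᵢ / Fᵢ + u)`. Crossing with `∇f` recovers `v` up to the degree of `f`,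
which shows that the `ρⱼ` and the `∇f × u` generate; `∑ j, ρⱼ = 0` and `σ^x = x • ρ₁` then discard
`ρ_m` and `σ^x`.

A relation among the generators likewise says that some logarithmic form is a multiple of `∇f / f`,
and a vanishing logarithmic form has residues divisible by the `Fᵢ`. The coefficients of the
relation therefore have no constant term, because the `∇Fᵢ` of degree at least two have none. Hence
the generators stay independent after reduction modulo the irrelevant ideal, which gives minimality
and the bound on the number of generators.
-/

section CommutativeAlgebra

/-- The ideal `J` generated by the family `g` has grade at least two, in the form used here: the
canonical map `A → Hom(J, A)` is bijective. A homomorphism `J → A` is encoded by its values `w` on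
the generators. -/
structure HasGradeTwo {A ι : Type*} [CommRing A] (g : ι → A) : Prop where
  eq_zero_of_forall_mul_eq_zero : ∀ r, (∀ t, g t * r = 0) → r = 0
  exists_eq_mul : ∀ w : ι → A, (∀ s t, g s * w t = g t * w s) → ∃ r, ∀ t, w t = r * g t

namespace HasGradeTwo

variable {A ι κ : Type*} [CommRing A] {g : ι → A}

lemma dvd_of_forall_dvd_mul (h : HasGradeTwo g) {a r : A} (ha : IsLeftRegular a)
    (hr : ∀ t, a ∣ g t * r) : a ∣ r := by
  choose w hw using hr
  obtain ⟨c, hc⟩ := h.exists_eq_mul w fun s t => ha <| by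
    linear_combination g t * hw s - g s * hw t
  refine ⟨c, sub_eq_zero.1 (h.eq_zero_of_forall_mul_eq_zero _ fun t => ?_)⟩
  linear_combination hw t + a * hc t

lemma of_mem_span [Finite κ] (h : HasGradeTwo g) {a : κ → A}
    (hg : ∀ t, g t ∈ Ideal.span (Set.range a)) : HasGradeTwo a := by
  cases nonempty_fintype κ
  choose α hα using fun t => Ideal.mem_span_range_iff_exists_fun.1 (hg t)
  have eq_zero (r : A) (hr : ∀ s, a s * r = 0) : r = 0 :=
    h.eq_zero_of_forall_mul_eq_zero r fun t => by
      simp only [← hα, Finset.sum_mul, mul_assoc, hr, mul_zero, Finset.sum_const_zero]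
  refine ⟨eq_zero, fun w hw => ?_⟩
  have g_mul (t : ι) (s : κ) : g t * w s = a s * ∑ i, α t i * w i := by
    rw [← hα, Finset.sum_mul, Finset.mul_sum]
    exact Finset.sum_congr rfl fun i _ => by linear_combination α t i * hw i s
  obtain ⟨r, hr⟩ := h.exists_eq_mul (fun t => ∑ i, α t i * w i) fun s t =>
    sub_eq_zero.1 <| eq_zero _ fun i => by
      linear_combination g t * g_mul s i - g s * g_mul t i
  refine ⟨r, fun s => sub_eq_zero.1 (h.eq_zero_of_forall_mul_eq_zero _ fun t => ?_)⟩
  linear_combination g_mul t s + a s * hr t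

end HasGradeTwo

variable {R : Type*} [CommRing R]

lemma mk_dvd_mk_iff {f a b : R} :
    Ideal.Quotient.mk (Ideal.span {f}) a ∣ Ideal.Quotient.mk (Ideal.span {f}) b ↔
      b ∈ Ideal.span {f, a} := by
  rw [Ideal.mem_span_pair]
  constructor
  · rintro ⟨c, hc⟩
    obtain ⟨c, rfl⟩ := Ideal.Quotient.mk_surjective c
    rw [← map_mul, Ideal.Quotient.mk_eq_mk_iff_sub_mem, Ideal.mem_span_singleton'] at hc
    obtain ⟨u, hu⟩ := hc
    exact ⟨u, c, by linear_combination hu⟩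
  · rintro ⟨u, c, rfl⟩
    refine ⟨Ideal.Quotient.mk _ c, ?_⟩
    rw [← map_mul, Ideal.Quotient.mk_eq_mk_iff_sub_mem, Ideal.mem_span_singleton']
    exact ⟨u, by ring⟩

lemma mk_span_singleton_eq_zero_iff {f a : R} :
    Ideal.Quotient.mk (Ideal.span {f}) a = 0 ↔ f ∣ a := by
  rw [Ideal.Quotient.eq_zero_iff_mem, Ideal.mem_span_singleton]

lemma isLeftRegular_mk_of_isRelPrime [DecompositionMonoid R] {f g : R} (h : IsRelPrime f g) :
    IsLeftRegular (Ideal.Quotient.mk (Ideal.span {f}) g) := by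
  refine isLeftRegular_iff_right_eq_zero_of_mul.2 fun r hr => ?_
  obtain ⟨r, rfl⟩ := Ideal.Quotient.mk_surjective r
  rw [← map_mul, mk_span_singleton_eq_zero_iff] at hr
  exact mk_span_singleton_eq_zero_iff.2 (h.dvd_of_dvd_mul_left hr)

lemma hasGradeTwo_mk_iff {ι : Type*} {f : R} {g : ι → R} :
    HasGradeTwo (fun t => Ideal.Quotient.mk (Ideal.span {f}) (g t)) ↔
      (∀ r, (∀ t, f ∣ g t * r) → f ∣ r) ∧
      ∀ w : ι → R, (∀ s t, f ∣ g s * w t - g t * w s) → ∃ r, ∀ t, f ∣ w t - r * g t := by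
  simp only [← mk_span_singleton_eq_zero_iff, map_sub, map_mul, sub_eq_zero]
  constructor
  · rintro ⟨h₁, h₂⟩
    refine ⟨fun r => h₁ _, fun w hw => ?_⟩
    obtain ⟨r, hr⟩ := h₂ _ hw
    obtain ⟨r, rfl⟩ := Ideal.Quotient.mk_surjective r
    exact ⟨r, hr⟩
  · rintro ⟨h₁, h₂⟩
    refine ⟨fun r => ?_, fun w => ?_⟩
    · obtain ⟨r, rfl⟩ := Ideal.Quotient.mk_surjective r
      exact h₁ r
    · choose w hw using fun t => Ideal.Quotient.mk_surjective (w t)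
      intro hww
      obtain ⟨r, hr⟩ := h₂ w (by simpa only [hw] using hww)
      exact ⟨Ideal.Quotient.mk _ r, fun t => by rw [← hw, hr]⟩

lemma dvd_of_dvd_mul_of_isRelPrime {M : Type*} [CommMonoidWithZero M] [IsCancelMulZero M]
    [DecompositionMonoid M] {a b f r : M} (hf : f ≠ 0) (hab : IsRelPrime a b) (ha : f ∣ a * r)
    (hb : f ∣ b * r) : f ∣ r := by
  obtain ⟨f₁, f₂, hf₁, ⟨r, rfl⟩, rfl⟩ := exists_dvd_and_dvd_of_dvd_mul ha
  rw [mul_comm f₁, mul_left_comm, mul_dvd_mul_iff_left (right_ne_zero_of_mul hf)] at hb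
  rw [mul_comm f₁]
  exact mul_dvd_mul_left f₂ ((hab.of_dvd_left hf₁).dvd_of_dvd_mul_left hb)

/-- Both the Koszul homology of the regular sequence `g` and that of the relatively prime pair
`g 0, g 1` are used: the first makes the coefficient of `f` in `g 0 * w 1 - g 1 * w 0` a
combination of `g 0, g 1`, the second then produces the factor `r`. -/
lemma hasGradeTwo_mk_of_regular [IsDomain R] [DecompositionMonoid R] {f : R} (hf : f ≠ 0)
    {g : Fin 3 → R} (h0 : g 0 ≠ 0) (h01 : IsRelPrime (g 0) (g 1))
    (h2 : ∀ r, g 2 * r ∈ Ideal.span {g 0, g 1} → r ∈ Ideal.span {g 0, g 1}) :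
    HasGradeTwo (fun t => Ideal.Quotient.mk (Ideal.span {f}) (g t)) := by
  have dvd_of_dvd_mul {r : R} : f ∣ g 0 * r → f ∣ g 1 * r → f ∣ r :=
    dvd_of_dvd_mul_of_isRelPrime hf h01
  refine hasGradeTwo_mk_iff.2 ⟨fun r hr => dvd_of_dvd_mul (hr 0) (hr 1), fun w hw => ?_⟩
  choose c hc using hw
  have g2_mul : g 2 * c 0 1 = g 0 * c 2 1 + g 1 * c 0 2 := mul_left_cancel₀ hf <| by
    linear_combination g 1 * hc 0 2 + g 0 * hc 2 1 - g 2 * hc 0 1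
  obtain ⟨u, v, huv⟩ := Ideal.mem_span_pair.1 <|
    h2 (c 0 1) (Ideal.mem_span_pair.2 ⟨c 2 1, c 0 2, by linear_combination -g2_mul⟩)
  have g0_mul : g 0 * (w 1 - f * u) = g 1 * (w 0 + f * v) := by
    linear_combination hc 0 1 - f * huv
  obtain ⟨r, hr⟩ : g 0 ∣ w 0 + f * v := h01.dvd_of_dvd_mul_left ⟨_, g0_mul.symm⟩
  have w1_eq : w 1 - r * g 1 = f * u := mul_left_cancel₀ h0 <| by
    linear_combination g0_mul + g 1 * hr
  refine ⟨r, fun t => dvd_of_dvd_mul ⟨c 0 t - g t * v, ?_⟩ ⟨c 1 t + g t * u, ?_⟩⟩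
  · linear_combination hc 0 t + g t * hr
  · linear_combination hc 1 t + g t * w1_eq

lemma prod_dvd_of_forall_dvd_of_dvd_mul {ι : Type*} (T : Finset ι) (f : ι → R) {r : R}
    (hf : ∀ j ∈ T, ∀ k ∈ T, j ≠ k → ∀ s, f j ∣ f k * s → f j ∣ s)
    (hr : ∀ j ∈ T, f j ∣ r) : ∏ j ∈ T, f j ∣ r := by
  classical
  induction T using Finset.induction_on with
  | empty => simp
  | insert j T hj ih =>
    simp only [Finset.forall_mem_insert] at hf hr
    obtain ⟨s, rfl⟩ := ih (fun k hk => (hf.2 k hk).2) hr.2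
    have dvd_of_dvd_prod_mul : ∀ U ⊆ T, ∀ s, f j ∣ (∏ k ∈ U, f k) * s → f j ∣ s := by
      intro U
      induction U using Finset.induction_on with
      | empty => simp
      | insert k U hk ihU =>
        intro hU s hs
        obtain ⟨hkT, hUT⟩ := Finset.insert_subset_iff.1 hU
        rw [Finset.prod_insert hk, mul_comm (f k), mul_assoc] at hs
        exact hf.1.2 k hkT (fun hjk => hj (hjk ▸ hkT)) s (ihU hUT _ hs)
    obtain ⟨t, rfl⟩ := dvd_of_dvd_prod_mul T subset_rfl s hr.1
    rw [Finset.prod_insert hj]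
    exact ⟨t, by ring⟩

section Cofactor

variable {ι : Type*} [Fintype ι] [DecidableEq ι] (F : ι → R)

/-- The product of all members of the family `F` except the `i`-th. -/
def cofactor (i : ι) : R := ∏ k ∈ Finset.univ.erase i, F k

lemma mul_cofactor (i : ι) : F i * cofactor F i = ∏ k, F k :=
  Finset.mul_prod_erase _ _ (Finset.mem_univ i)

lemma dvd_cofactor {i j : ι} (hij : i ≠ j) : F j ∣ cofactor F i :=
  Finset.dvd_prod_of_mem F (Finset.mem_erase.2 ⟨hij.symm, Finset.mem_univ j⟩)

lemma derivation_prod_s5 {k : Type*} [CommRing k] [Algebra k R] (D : Derivation k R R) :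
    D (∏ i, F i) = ∑ i, cofactor F i * D (F i) := by
  have derivation_prod_finset (T : Finset ι) :
      D (∏ i ∈ T, F i) = ∑ i ∈ T, (∏ k ∈ T.erase i, F k) * D (F i) := by
    induction T using Finset.induction_on with
    | empty => simp
    | insert j T hj ih =>
      rw [Finset.prod_insert hj, D.leibniz, ih, Finset.sum_insert hj, Finset.erase_insert hj,
        smul_eq_mul, smul_eq_mul, add_comm, mul_comm, Finset.mul_sum]
      refine congrArg _ (Finset.sum_congr rfl fun i hi => ?_)
      have hji : j ≠ i := (ne_of_mem_of_not_mem hi hj).symm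
      rw [Finset.erase_insert_of_ne hji,
        Finset.prod_insert fun h => hj (Finset.mem_of_mem_erase h), mul_assoc]
  exact derivation_prod_finset Finset.univ

end Cofactor

section MinimalGenerators

variable {M K ι : Type*} [AddCommGroup M] [Module R M] [CommRing K] [Nontrivial K] [Fintype ι]
  {ε : R →+* K} {G : ι → M} (hG : ∀ q : ι → R, ∑ i, q i • G i = 0 → ∀ i, ε (q i) = 0)

include hG

lemma notMem_span_of_relations (i : ι) : G i ∉ Submodule.span R (G '' {i}ᶜ) := by
  classical
  rw [← Finset.coe_singleton, ← Finset.coe_compl,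
    Submodule.mem_span_image_finset_iff_exists_fun']
  rintro ⟨c, hc⟩
  have h := hG (Function.update c i (-1)) (by
    rw [← Finset.sum_compl_add_sum {i}, Finset.sum_singleton, Function.update_self, neg_one_smul,
      ← hc, add_neg_eq_zero]
    refine Finset.sum_congr rfl fun j hj => ?_
    rw [Function.update_of_ne (by simpa using hj)]) i
  simp at h

lemma card_le_card_of_relations {T : Finset M}
    (hT : Submodule.span R (T : Set M) = Submodule.span R (Set.range G)) :
    Fintype.card ι ≤ T.card := by
  classical
  have hA (i : ι) : ∃ A : T → R, ∑ t, A t • (t : M) = G i := by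
    rw [← Submodule.mem_span_range_iff_exists_fun, Subtype.range_coe_subtype,
      Finset.setOfPred_mem, hT]
    exact Submodule.subset_span ⟨i, rfl⟩
  have hB (t : T) : ∃ B : ι → R, ∑ i, B i • G i = t := by
    rw [← Submodule.mem_span_range_iff_exists_fun, ← hT]
    exact Submodule.subset_span t.2
  choose A hA using hA
  choose B hB using hB
  have relation (i : ι) :
      ∑ j, (Matrix.of A * Matrix.of B - 1 : Matrix ι ι R) i j • G j = 0 := by
    simp only [Matrix.sub_apply, Matrix.mul_apply, Matrix.of_apply, sub_smul,
      Finset.sum_sub_distrib, Finset.sum_smul, mul_smul]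
    rw [Finset.sum_comm]
    simp only [← Finset.smul_sum, hB, hA, Matrix.one_apply, ite_smul, one_smul, zero_smul,
      Finset.sum_ite_eq, Finset.mem_univ, if_true, sub_self]
  have map_sub_one : ε.mapMatrix (Matrix.of A * Matrix.of B - 1) = 0 := by
    ext i j
    exact hG _ (relation i) j
  have map_mul_map : (Matrix.of A).map ε * (Matrix.of B).map ε = 1 := by
    rwa [map_sub, map_one, sub_eq_zero, RingHom.mapMatrix_apply, Matrix.map_mul] at map_sub_one
  calc Fintype.card ι = (1 : Matrix ι ι K).rank := Matrix.rank_one.symm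
    _ ≤ ((Matrix.of B).map ε).rank := map_mul_map ▸ Matrix.rank_mul_le_right _ _
    _ ≤ Fintype.card T := Matrix.rank_le_card_height _
    _ = T.card := Fintype.card_coe T

end MinimalGenerators

end CommutativeAlgebra

section Polynomials

variable {σ K : Type*} [Field K]

lemma exists_pow_mem_of_forall_eval [IsAlgClosed K] [Finite σ] {I : Ideal (MvPolynomial σ K)}
    {g : MvPolynomial σ K} (h : ∀ p : σ → K, (∀ a ∈ I, eval p a = 0) → eval p g = 0) :
    ∃ N : ℕ, g ^ N ∈ I := by
  have mem_vanishing : g ∈ vanishingIdeal K (zeroLocus K I) := fun p hp => by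
    simpa only [aeval_eq_eval] using h p fun a ha => by simpa only [aeval_eq_eval] using hp a ha
  rwa [vanishingIdeal_zeroLocus_eq_radical] at mem_vanishing

lemma exists_X_pow_mem_of_zeros [IsAlgClosed K] [Finite σ] {I : Ideal (MvPolynomial σ K)}
    (h : ∀ p : σ → K, (∀ a ∈ I, eval p a = 0) → p = 0) (s : σ) : ∃ N : ℕ, X s ^ N ∈ I :=
  exists_pow_mem_of_forall_eval fun p hp => by rw [h p hp, eval_X, Pi.zero_apply]

lemma isRelPrime_X_pow {i j : σ} (hij : i ≠ j) (l n : ℕ) :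
    IsRelPrime (X i ^ l : MvPolynomial σ K) (X j ^ n) :=
  .pow <| (X_prime (i := i)).irreducible.isRelPrime_iff_not_dvd.2 fun h => hij (by simpa using h)

lemma mem_span_X_pow_pair_iff {R : Type*} [CommRing R] {i j : σ} {l m : ℕ}
    {r : MvPolynomial σ R} :
    r ∈ Ideal.span {(X i ^ l : MvPolynomial σ R), X j ^ m} ↔
      ∀ d ∈ r.support, l ≤ d i ∨ m ≤ d j := by
  have monomials : ({X i ^ l, X j ^ m} : Set (MvPolynomial σ R)) =
      (fun d => monomial d (1 : R)) '' {Finsupp.single i l, Finsupp.single j m} := by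
    simp only [Set.image_pair, X_pow_eq_monomial]
  simp only [monomials, mem_ideal_span_monomial_image, Set.mem_insert_iff, Set.mem_singleton_iff,
    exists_eq_or_imp, exists_eq_left, Finsupp.single_le_iff]

lemma mem_span_X_pow_pair_of_X_pow_mul_mem {R : Type*} [CommRing R] {i j k : σ} (hik : i ≠ k)
    (hjk : j ≠ k) {l m n : ℕ} {r : MvPolynomial σ R}
    (hr : X k ^ n * r ∈ Ideal.span {(X i ^ l : MvPolynomial σ R), X j ^ m}) :
    r ∈ Ideal.span {(X i ^ l : MvPolynomial σ R), X j ^ m} := by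
  rw [mem_span_X_pow_pair_iff] at hr ⊢
  intro d hd
  have shifted := hr (Finsupp.single k n + d) (by
    rwa [mem_support_iff, X_pow_eq_monomial, coeff_monomial_mul, one_mul, ← mem_support_iff])
  rwa [Finsupp.add_apply, Finsupp.add_apply, Finsupp.single_eq_of_ne hik,
    Finsupp.single_eq_of_ne hjk, zero_add, zero_add] at shifted

lemma hasGradeTwo_mk_of_zeros [IsAlgClosed K] [Fintype σ] (hσ : 2 < Fintype.card σ) {ι : Type*}
    [Finite ι] {f : MvPolynomial σ K} (hf : f ≠ 0) {a : ι → MvPolynomial σ K}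
    (h : ∀ p : σ → K, eval p f = 0 → (∀ t, eval p (a t) = 0) → p = 0) :
    HasGradeTwo (fun t => Ideal.Quotient.mk (Ideal.span {f}) (a t)) := by
  obtain ⟨i, j, k, hij, hik, hjk⟩ := Fintype.two_lt_card_iff.1 hσ
  choose N hN using exists_X_pow_mem_of_zeros (I := Ideal.span {f} ⊔ Ideal.span (Set.range a))
    fun p hp => h p (hp f (Ideal.mem_sup_left (Ideal.mem_span_singleton_self f)))
      fun t => hp _ (Ideal.mem_sup_right (Ideal.subset_span ⟨t, rfl⟩))
  have powers := hasGradeTwo_mk_of_regular hf (g := ![X i ^ N i, X j ^ N j, X k ^ N k])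
    (pow_ne_zero _ (X_ne_zero i)) (isRelPrime_X_pow hij _ _)
    fun r => mem_span_X_pow_pair_of_X_pow_mul_mem hik hjk
  have mk_mem (s : σ) : Ideal.Quotient.mk (Ideal.span {f}) (X s ^ N s) ∈
      Ideal.span (Set.range fun t => Ideal.Quotient.mk (Ideal.span {f}) (a t)) := by
    have := Ideal.mem_map_of_mem (Ideal.Quotient.mk (Ideal.span {f})) (hN s)
    rwa [Ideal.map_sup, Ideal.map_quotient_self, bot_sup_eq, Ideal.map_span,
      ← Set.range_comp] at this
  refine powers.of_mem_span fun t => ?_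
  fin_cases t
  exacts [mk_mem i, mk_mem j, mk_mem k]

lemma isUnit_of_zeros [IsAlgClosed K] [Finite σ] [Nontrivial σ] {d : MvPolynomial σ K}
    (h : ∀ p : σ → K, eval p d = 0 → p = 0) : IsUnit d := by
  obtain ⟨i, j, hij⟩ := exists_pair_ne σ
  choose N hN using exists_X_pow_mem_of_zeros (I := Ideal.span {d})
    fun p hp => h p (hp d (Ideal.mem_span_singleton_self d))
  simp only [Ideal.mem_span_singleton] at hN
  exact isRelPrime_X_pow hij _ _ (hN i) (hN j)

end Polynomials

section GradientCalculus

open scoped Matrix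

lemma dvd_mul_sub_mul_of_dvd_cross {R : Type*} [CommRing R] {f : R} {v w : Fin 3 → R}
    (h : ∀ t, f ∣ (v ⨯₃ w) t) (s t : Fin 3) : f ∣ v s * w t - v t * w s := by
  have h0 : f ∣ v 1 * w 2 - v 2 * w 1 := h 0
  have h1 : f ∣ v 2 * w 0 - v 0 * w 2 := h 1
  have h2 : f ∣ v 0 * w 1 - v 1 * w 0 := h 2
  fin_cases s <;> fin_cases t <;>
    first | assumption | exact (dvd_sub_comm.1 ‹_›) | simp

lemma X_dotProduct_grad {g : S} {n : ℕ} (hg : g.IsHomogeneous n) :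
    (X : Fin 3 → S) ⬝ᵥ grad g = n * g :=
  hg.sum_X_mul_pderiv.trans (nsmul_eq_mul _ _)

lemma mem_D0_iff {f : S} {v : Fin 3 → S} : v ∈ D0 f ↔ grad f ⬝ᵥ v = 0 := by
  rw [dotProduct_comm]; rfl

lemma cross_mem_D0 (f : S) (u : Fin 3 → S) : grad f ⨯₃ u ∈ D0 f :=
  mem_D0_iff.2 (dot_self_cross _ _)

lemma grad_cross (f : S) (u : Fin 3 → S) :
    grad f ⨯₃ u = u 0 • sigx f + u 1 • sigy f + u 2 • sigz f := by
  ext1 t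
  fin_cases t <;> simp [cross_apply, sigx, sigy, sigz, grad] <;> ring

variable {m : ℕ} (F : Fin m → S)

lemma grad_prod : grad (∏ i, F i) = ∑ i, cofactor F i • grad (F i) := by
  ext1 t
  simp only [grad, derivation_prod_s5, Finset.sum_apply, Pi.smul_apply, smul_eq_mul]

lemma smul_rho (j : Fin m) : F j • rho F j = grad (∏ i, F i) ⨯₃ grad (F j) := by
  rw [rho, grad_prod, map_sum, LinearMap.sum_apply, ← Finset.sum_erase_add _ _ (Finset.mem_univ j),
    map_smul, LinearMap.smul_apply, cross_self, smul_zero, add_zero, Finset.smul_sum]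
  refine Finset.sum_congr rfl fun i hi => ?_
  rw [map_smul, LinearMap.smul_apply, smul_smul, cofactor, Finset.erase_right_comm,
    Finset.mul_prod_erase _ _ (by simpa using (Finset.ne_of_mem_erase hi).symm)]

lemma rho_mem_D0 {j : Fin m} (hj : F j ≠ 0) : rho F j ∈ D0 (∏ i, F i) := by
  have h := cross_mem_D0 (∏ i, F i) (grad (F j))
  rw [← smul_rho, mem_D0_iff, dotProduct_smul] at h
  exact mem_D0_iff.2 ((smul_eq_zero.1 h).resolve_left hj)

/-- The polynomial vector representing `f • (∑ i, r i • dFᵢ / Fᵢ + u)` with `f = ∏ i, F i`: the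
numerator of a `1`-form with logarithmic poles along the `Fᵢ` and residue `r i` along `Fᵢ`. -/
noncomputable def logForm (r : Fin m → S) (u : Fin 3 → S) : Fin 3 → S :=
  ∑ i, (r i * cofactor F i) • grad (F i) + (∏ i, F i) • u

variable (r : Fin m → S) (u : Fin 3 → S)

lemma grad_prod_cross_logForm : grad (∏ i, F i) ⨯₃ logForm F r u =
    (∏ i, F i) • (∑ i, r i • rho F i + grad (∏ i, F i) ⨯₃ u) := by
  rw [logForm, map_add, map_sum, map_smul, smul_add, Finset.smul_sum]
  congr 1
  refine Finset.sum_congr rfl fun i _ => ?_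
  rw [map_smul, ← smul_rho, smul_smul, smul_smul, ← mul_cofactor F i]
  congr 1
  ring

lemma X_dotProduct_logForm {e : Fin m → ℕ} (hF : ∀ i, (F i).IsHomogeneous (e i)) :
    (X : Fin 3 → S) ⬝ᵥ logForm F r u = (∏ i, F i) * (∑ i, r i * e i + (X : Fin 3 → S) ⬝ᵥ u) := by
  rw [logForm, dotProduct_add, dotProduct_sum, dotProduct_smul, smul_eq_mul, mul_add,
    Finset.mul_sum]
  congr 1
  refine Finset.sum_congr rfl fun i _ => ?_
  rw [dotProduct_smul, X_dotProduct_grad (hF i), smul_eq_mul, ← mul_cofactor F i]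
  ring

lemma smul_logForm_sub_smul_grad (c b : S) : c • logForm F r u - b • grad (∏ i, F i) =
    logForm F (fun i => c * r i - b) (c • u) := by
  simp only [logForm, grad_prod, smul_add, Finset.smul_sum, smul_smul, sub_mul, sub_smul,
    Finset.sum_sub_distrib, mul_assoc, mul_comm c (∏ i, F i)]
  abel

lemma logForm_mul (s : Fin m → S) : logForm F (fun j => F j * s j) u =
    (∏ i, F i) • (∑ j, s j • grad (F j) + u) := by
  have coefficient (j : Fin m) : F j * s j * cofactor F j = (∏ i, F i) * s j := by
    rw [mul_right_comm, mul_cofactor]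
  simp only [logForm, smul_add, Finset.smul_sum, smul_smul, coefficient]

lemma sum_rho (hF : ∀ i, F i ≠ 0) : ∑ i, rho F i = 0 := by
  have h := grad_prod_cross_logForm F 1 0
  simp only [logForm, Pi.one_apply, one_mul, one_smul, smul_zero, add_zero,
    ← grad_prod, cross_self, map_zero] at h
  exact (smul_eq_zero.1 h.symm).resolve_left (Finset.prod_ne_zero_iff.2 fun i _ => hF i)

lemma sigx_prod {j : Fin m} (hj : F j = X 0) :
    sigx (∏ i, F i) = (X 0 : S) • rho F j := by
  rw [← hj, smul_rho, grad_cross, hj]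
  simp [grad, pderiv_X]

end GradientCalculus

section SmoothNodalCurves

open scoped Matrix

/-- The `1`-form `w / f` has at most a logarithmic pole along `f = 0`: the polynomial `f` divides
`df ∧ w`. -/
def IsLogarithmic (f : S) (w : Fin 3 → S) : Prop := ∀ t, f ∣ (grad f ⨯₃ w) t

/-- The plane curves `F j = 0` of degrees `e j` are smooth and their union is a nodal curve: any
two of them meet transversally and no three of them have a common point. -/
structure IsSmoothNodal {m : ℕ} (F : Fin m → S) (e : Fin m → ℕ) : Prop where
  isHomogeneous : ∀ j, (F j).IsHomogeneous (e j)
  smooth : ∀ j, ∀ p : Fin 3 → ℂ, (∀ t, eval p (pderiv t (F j)) = 0) → p = 0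
  transversal : ∀ i j : Fin m, i ≠ j → ∀ p : Fin 3 → ℂ, p ≠ 0 →
    eval p (F i) = 0 → eval p (F j) = 0 →
    LinearIndependent ℂ ![fun t => eval p (pderiv t (F i)), fun t => eval p (pderiv t (F j))]
  no_triple_point : ∀ i j k : Fin m, i ≠ j → i ≠ k → j ≠ k → ∀ p : Fin 3 → ℂ, p ≠ 0 →
    ¬(eval p (F i) = 0 ∧ eval p (F j) = 0 ∧ eval p (F k) = 0)

namespace IsSmoothNodal

variable {m : ℕ} {F : Fin m → S} {e : Fin m → ℕ} (h : IsSmoothNodal F e)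

include h

lemma degree_ne_zero (j : Fin m) : e j ≠ 0 := fun hj => by
  have hF := h.isHomogeneous j
  rw [hj, ← totalDegree_zero_iff_isHomogeneous, totalDegree_eq_zero_iff_eq_C] at hF
  refine one_ne_zero (h.smooth j 1 fun t => ?_)
  rw [hF, pderiv_C, map_zero]

lemma ne_zero (j : Fin m) : F j ≠ 0 := fun hj =>
  one_ne_zero (h.smooth j 1 fun t => by rw [hj, map_zero, map_zero])

lemma prod_ne_zero : ∏ i, F i ≠ 0 := Finset.prod_ne_zero_iff.2 fun i _ => h.ne_zero i

lemma constantCoeff_eq_zero (j : Fin m) : constantCoeff (F j) = 0 :=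
  (h.isHomogeneous j).coeff_eq_zero (by simpa using (h.degree_ne_zero j).symm)

lemma exists_eval_cross_grad_ne_zero {i j : Fin m} (hij : i ≠ j) {p : Fin 3 → ℂ} (hp : p ≠ 0)
    (hi : eval p (F i) = 0) (hj : eval p (F j) = 0) :
    ∃ t, eval p ((grad (F i) ⨯₃ grad (F j)) t) ≠ 0 := by
  have := crossProduct_ne_zero_iff_linearIndependent.2 (h.transversal i j hij p hp hi hj)
  contrapose! this
  ext t
  have ht := this t
  revert ht
  fin_cases t <;> simp [cross_apply, grad]

lemma isRelPrime {i j : Fin m} (hij : i ≠ j) : IsRelPrime (F i) (F j) := by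
  rintro d ⟨a, ha⟩ ⟨b, hb⟩
  refine isUnit_of_zeros fun p hd => by_contra fun hp => ?_
  obtain ⟨t, ht⟩ := h.exists_eval_cross_grad_ne_zero hij hp (by rw [ha, map_mul, hd, zero_mul])
    (by rw [hb, map_mul, hd, zero_mul])
  revert ht
  fin_cases t <;> simp [cross_apply, grad, ha, hb, hd] <;> ring

lemma isRelPrime_cofactor (i : Fin m) : IsRelPrime (F i) (cofactor F i) :=
  IsRelPrime.prod_right fun _ hj => h.isRelPrime (Finset.ne_of_mem_erase hj).symm

lemma hasGradeTwo_grad (i : Fin m) :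
    HasGradeTwo (fun t => Ideal.Quotient.mk (Ideal.span {F i}) (grad (F i) t)) :=
  hasGradeTwo_mk_of_zeros (by simp) (h.ne_zero i) fun p _ => h.smooth i p

lemma hasGradeTwo_pair {i j k : Fin m} (hij : i ≠ j) (hik : i ≠ k) (hjk : j ≠ k) :
    HasGradeTwo (fun t => Ideal.Quotient.mk (Ideal.span {F i}) (![F j, F k] t)) :=
  hasGradeTwo_mk_of_zeros (by simp) (h.ne_zero i) fun p hi hp =>
    by_contra fun hp0 => h.no_triple_point i j k hij hik hjk p hp0 ⟨hi, hp 0, hp 1⟩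

lemma hasGradeTwo_minors {i j : Fin m} (hij : i ≠ j) :
    HasGradeTwo (fun t : Option (Fin 3) => Ideal.Quotient.mk (Ideal.span {F i})
      (t.elim (F j) (grad (F j) ⨯₃ grad (F i)))) :=
  hasGradeTwo_mk_of_zeros (by simp) (h.ne_zero i) fun p hi hp => by_contra fun hp0 => by
    obtain ⟨t, ht⟩ := h.exists_eval_cross_grad_ne_zero hij.symm hp0 (hp none) hi
    exact ht (hp (some t))

lemma isLeftRegular_mk {i j : Fin m} (hij : i ≠ j) :
    IsLeftRegular (Ideal.Quotient.mk (Ideal.span {F i}) (F j)) :=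
  isLeftRegular_mk_of_isRelPrime (h.isRelPrime hij)

lemma dvd_of_dvd_mul_mod {i j k : Fin m} (hij : i ≠ j) (hik : i ≠ k) (hjk : j ≠ k)
    {r : S ⧸ Ideal.span {F i}}
    (hr : Ideal.Quotient.mk _ (F j) ∣ Ideal.Quotient.mk _ (F k) * r) :
    Ideal.Quotient.mk _ (F j) ∣ r :=
  (h.hasGradeTwo_pair hij hik hjk).dvd_of_forall_dvd_mul (h.isLeftRegular_mk hij) <|
    Fin.forall_fin_two.2 ⟨dvd_mul_right _ _, hr⟩

variable {w : Fin 3 → S}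

lemma exists_residue {i : Fin m} (hw : IsLogarithmic (F i) w) :
    ∃ r, ∀ t, F i ∣ w t - r * grad (F i) t :=
  (hasGradeTwo_mk_iff.1 (h.hasGradeTwo_grad i)).2 w (dvd_mul_sub_mul_of_dvd_cross hw)

lemma residue_mem_span_pair {i j : Fin m} (hij : i ≠ j) (hw : IsLogarithmic (F j) w) {r : S}
    (hr : ∀ t, F i ∣ w t - r * grad (F i) t) : r ∈ Ideal.span {F i, F j} := by
  choose a ha using hr
  have w_eq : w = r • grad (F i) + F i • a := by
    ext1 t
    simp only [Pi.add_apply, Pi.smul_apply, smul_eq_mul]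
    linear_combination ha t
  rw [← mk_dvd_mk_iff]
  refine (h.hasGradeTwo_minors hij).dvd_of_forall_dvd_mul (h.isLeftRegular_mk hij)
    (Option.forall.2 ⟨dvd_mul_right _ _, fun t => ?_⟩)
  obtain ⟨c, hc⟩ := hw t
  rw [w_eq, map_add, map_smul, map_smul] at hc
  simp only [Pi.add_apply, Pi.smul_apply, smul_eq_mul] at hc
  rw [← map_mul, mk_dvd_mk_iff, Ideal.mem_span_pair]
  refine ⟨-(grad (F j) ⨯₃ a) t, c, ?_⟩
  rw [Option.elim_some]
  linear_combination -hc

lemma exists_residue_mul_cofactor (hw : ∀ j, IsLogarithmic (F j) w) (i : Fin m) :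
    ∃ r, ∀ t, F i ∣ w t - r * cofactor F i * grad (F i) t := by
  obtain ⟨r, hr⟩ := h.exists_residue (hw i)
  have mk_cofactor_dvd : Ideal.Quotient.mk (Ideal.span {F i}) (cofactor F i) ∣
      Ideal.Quotient.mk (Ideal.span {F i}) r := by
    rw [cofactor, map_prod]
    refine prod_dvd_of_forall_dvd_of_dvd_mul _ _ (fun j hj k hk hjk s => ?_) fun j hj => ?_
    · exact h.dvd_of_dvd_mul_mod (Finset.ne_of_mem_erase hj).symm (Finset.ne_of_mem_erase hk).symm
        hjk
    · exact mk_dvd_mk_iff.2 (h.residue_mem_span_pair (Finset.ne_of_mem_erase hj).symm (hw j) hr)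
  obtain ⟨a, b, hab⟩ := Ideal.mem_span_pair.1 (mk_dvd_mk_iff.1 mk_cofactor_dvd)
  refine ⟨b, fun t => ?_⟩
  obtain ⟨c, hc⟩ := hr t
  exact ⟨c + a * grad (F i) t, by linear_combination hc - grad (F i) t * hab⟩

lemma exists_eq_logForm (hw : ∀ j, IsLogarithmic (F j) w) : ∃ r u, w = logForm F r u := by
  choose r hr using h.exists_residue_mul_cofactor hw
  have prod_dvd (t : Fin 3) :
      ∏ i, F i ∣ w t - ∑ i, r i * cofactor F i * grad (F i) t := by
    refine Fintype.prod_dvd_of_isRelPrime (fun i j => h.isRelPrime) fun j => ?_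
    rw [← Finset.add_sum_erase _ _ (Finset.mem_univ j), ← sub_sub]
    exact dvd_sub (hr j t) <| Finset.dvd_sum fun i hi =>
      ((dvd_cofactor F (Finset.ne_of_mem_erase hi)).mul_left _).mul_right _
  choose u hu using prod_dvd
  refine ⟨r, u, funext fun t => ?_⟩
  simp only [logForm, Pi.add_apply, Finset.sum_apply, Pi.smul_apply, smul_eq_mul]
  linear_combination hu t

lemma exists_of_logForm_eq_zero {r : Fin m → S} {u : Fin 3 → S} (hru : logForm F r u = 0) :
    ∃ s : Fin m → S, (∀ j, r j = F j * s j) ∧ u = -∑ j, s j • grad (F j) := by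
  have dvd_residue (j : Fin m) : F j ∣ r j := by
    refine (h.isRelPrime_cofactor j).dvd_of_dvd_mul_right <|
      (hasGradeTwo_mk_iff.1 (h.hasGradeTwo_grad j)).1 _ fun t => ?_
    have ht := congrFun hru t
    simp only [logForm, Pi.add_apply, Finset.sum_apply, Pi.smul_apply, smul_eq_mul,
      Pi.zero_apply] at ht
    rw [← Finset.add_sum_erase _ _ (Finset.mem_univ j), add_assoc, ← eq_neg_iff_add_eq_zero] at ht
    rw [mul_comm, ht, dvd_neg]
    refine dvd_add (Finset.dvd_sum fun i hi => ?_) ?_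
    · exact ((dvd_cofactor F (Finset.ne_of_mem_erase hi)).mul_left _).mul_right _
    · exact (Finset.dvd_prod_of_mem F (Finset.mem_univ j)).mul_right _
  choose s hs using dvd_residue
  obtain rfl : r = fun j => F j * s j := funext hs
  rw [logForm_mul] at hru
  exact ⟨s, fun _ => rfl,
    eq_neg_of_add_eq_zero_right ((smul_eq_zero.1 hru).resolve_left h.prod_ne_zero)⟩

lemma prod_isHomogeneous : (∏ i, F i).IsHomogeneous (∑ i, e i) :=
  IsHomogeneous.prod _ _ _ fun i _ => h.isHomogeneous i

lemma isUnit_degree [NeZero m] : IsUnit ((∑ i, e i : ℕ) : S) := by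
  rw [← map_natCast (C : ℂ →+* S)]
  refine IsUnit.map C (isUnit_iff_ne_zero.2 (Nat.cast_ne_zero.2 fun hd => ?_))
  exact h.degree_ne_zero 0 (Finset.sum_eq_zero_iff.1 hd 0 (Finset.mem_univ 0))

lemma dvd_grad_dotProduct {v : Fin 3 → S} (hv : v ∈ D0 (∏ i, F i)) (j : Fin m) :
    F j ∣ grad (F j) ⬝ᵥ v := by
  refine (h.isRelPrime_cofactor j).dvd_of_dvd_mul_left ?_
  rw [mem_D0_iff, grad_prod, sum_dotProduct, ← Finset.add_sum_erase _ _ (Finset.mem_univ j),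
    add_eq_zero_iff_eq_neg, smul_dotProduct, smul_eq_mul] at hv
  rw [hv, dvd_neg]
  refine Finset.dvd_sum fun i hi => ?_
  rw [smul_dotProduct]
  exact (dvd_cofactor F (Finset.ne_of_mem_erase hi)).mul_right _

lemma isLogarithmic_X_cross {v : Fin 3 → S} (hv : v ∈ D0 (∏ i, F i)) (j : Fin m) :
    IsLogarithmic (F j) (X ⨯₃ v) := fun t => by
  rw [cross_cross_eq_smul_sub_smul', X_dotProduct_grad (h.isHomogeneous j)]
  exact dvd_sub ((h.dvd_grad_dotProduct hv j).mul_right _) ((dvd_mul_left _ _).mul_right _)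

theorem D0_prod_eq_span_rho_sup_range_cross [NeZero m] :
    D0 (∏ i, F i) = Submodule.span S (Set.range (rho F)) ⊔
      LinearMap.range (crossProduct (grad (∏ i, F i))) := by
  apply le_antisymm
  · intro v hv
    obtain ⟨r, u, hru⟩ := h.exists_eq_logForm (h.isLogarithmic_X_cross hv)
    have degree_smul : ((∑ i, e i : ℕ) : S) • v =
        ∑ i, -r i • rho F i + grad (∏ i, F i) ⨯₃ (-u) := by
      have hcross := grad_prod_cross_logForm F r u
      rw [← hru, cross_cross_eq_smul_sub_smul', mem_D0_iff.1 hv, zero_smul, zero_sub,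
        X_dotProduct_grad h.prod_isHomogeneous, mul_comm, mul_smul, ← smul_neg] at hcross
      simpa [neg_eq_iff_eq_neg, add_comm] using smul_right_injective _ h.prod_ne_zero hcross
    rw [← Submodule.smul_mem_iff_of_isUnit _ h.isUnit_degree, degree_smul]
    exact add_mem (sum_mem fun i _ => Submodule.mem_sup_left <|
      Submodule.smul_mem _ _ (Submodule.subset_span ⟨i, rfl⟩)) (Submodule.mem_sup_right ⟨_, rfl⟩)
  · rw [sup_le_iff, Submodule.span_le]
    exact ⟨Set.range_subset_iff.2 fun j => rho_mem_D0 F (h.ne_zero j),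
      by rintro _ ⟨u, rfl⟩; exact cross_mem_D0 _ u⟩

lemma exists_of_sum_smul_rho_add_cross_eq_zero {q : Fin m → S} {u : Fin 3 → S}
    (hqu : ∑ i, q i • rho F i + grad (∏ i, F i) ⨯₃ u = 0) :
    ∃ (H : S) (s : Fin m → S), (∀ j, ((∑ i, e i : ℕ) : S) * q j = H + F j * s j) ∧
      ((∑ i, e i : ℕ) : S) • u = -∑ j, s j • grad (F j) := by
  have cross_eq_zero := grad_prod_cross_logForm F q u
  rw [hqu, smul_zero] at cross_eq_zero
  have hcross := cross_cross_eq_smul_sub_smul' X (grad (∏ i, F i)) (logForm F q u)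
  rw [cross_eq_zero, map_zero, dotProduct_comm (grad _), X_dotProduct_grad h.prod_isHomogeneous,
    X_dotProduct_logForm _ _ _ h.isHomogeneous, mul_comm _ (∏ i, F i), mul_smul,
    mul_smul, ← smul_sub, eq_comm, smul_eq_zero,
    or_iff_right h.prod_ne_zero, ← neg_eq_zero, neg_sub, smul_logForm_sub_smul_grad] at hcross
  obtain ⟨s, hs, hu⟩ := h.exists_of_logForm_eq_zero hcross
  exact ⟨_, s, fun j => sub_eq_iff_eq_add'.1 (hs j), hu⟩

section Relations

variable [NeZero m] {q : Fin m → S} {u : Fin 3 → S}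
  (hqu : ∑ i, q i • rho F i + grad (∏ i, F i) ⨯₃ u = 0)

include hqu

lemma constantCoeff_rho_coeff_eq_zero {l : Fin m} (hl : q l = 0) (j : Fin m) :
    constantCoeff (q j) = 0 := by
  obtain ⟨H, s, hs, -⟩ := h.exists_of_sum_smul_rho_add_cross_eq_zero hqu
  have degree_mul (i : Fin m) :
      constantCoeff ((∑ i, e i : ℕ) : S) * constantCoeff (q i) = constantCoeff H := by
    rw [← map_mul, hs, map_add, map_mul, h.constantCoeff_eq_zero, zero_mul, add_zero]
  have hj := degree_mul j
  rw [← degree_mul l, hl, map_zero, mul_zero] at hj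
  exact (mul_eq_zero.1 hj).resolve_left (h.isUnit_degree.map constantCoeff).ne_zero

lemma constantCoeff_cross_coeff_eq_zero {t : Fin 3}
    (ht : ∀ j, constantCoeff (grad (F j) t) = 0) : constantCoeff (u t) = 0 := by
  obtain ⟨H, s, -, hu⟩ := h.exists_of_sum_smul_rho_add_cross_eq_zero hqu
  have degree_mul := congrArg constantCoeff (congrFun hu t)
  simp only [Pi.smul_apply, Pi.neg_apply, Finset.sum_apply, smul_eq_mul, map_neg, map_sum, map_mul,
    ht, mul_zero, Finset.sum_const_zero, neg_zero] at degree_mul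
  exact (mul_eq_zero.1 degree_mul).resolve_left (h.isUnit_degree.map constantCoeff).ne_zero

end Relations

lemma constantCoeff_grad {j : Fin m} (hj : 2 ≤ e j) (t : Fin 3) :
    constantCoeff (grad (F j) t) = 0 :=
  (h.isHomogeneous j).pderiv.coeff_eq_zero (by simp; omega)

end IsSmoothNodal

section Line

variable {n : ℕ} {F : Fin (n + 1) → S} {e : Fin (n + 1) → ℕ}

lemma rho_mem_span_G1 (hF : ∀ i, F i ≠ 0) (j : Fin (n + 1)) :
    rho F j ∈ Submodule.span S (Set.range (G1 F)) := by
  have castSucc_mem (i : Fin n) : rho F i.castSucc ∈ Submodule.span S (Set.range (G1 F)) :=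
    Submodule.subset_span ⟨Sum.inl i, rfl⟩
  induction j using Fin.lastCases with
  | cast i => exact castSucc_mem i
  | last =>
    have hsum := sum_rho F hF
    rw [Fin.sum_univ_castSucc] at hsum
    rw [eq_neg_of_add_eq_zero_right hsum]
    exact neg_mem (sum_mem fun i _ => castSucc_mem i)

lemma sum_smul_G1 (q : Fin (n + 1 - 1) ⊕ Fin 2 → S) : ∑ i, q i • G1 F i =
    ∑ i, (Fin.snoc (q ∘ Sum.inl) 0 : Fin (n + 1) → S) i • rho F i +
      grad (∏ i, F i) ⨯₃ ![0, q (Sum.inr 0), q (Sum.inr 1)] := by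
  rw [grad_cross, Fin.sum_univ_castSucc, Fintype.sum_sum_type, Fin.sum_univ_two, Fin.snoc_last]
  simp only [Fin.snoc_castSucc, zero_smul, add_zero, zero_add, Matrix.cons_val]
  rfl

variable (h : IsSmoothNodal F e) (hF0 : F 0 = X 0)

include h hF0

theorem D0_prod_eq_span_G1 : D0 (∏ i, F i) = Submodule.span S (Set.range (G1 F)) := by
  rw [h.D0_prod_eq_span_rho_sup_range_cross]
  apply le_antisymm
  · rw [sup_le_iff, Submodule.span_le]
    refine ⟨Set.range_subset_iff.2 (rho_mem_span_G1 h.ne_zero), ?_⟩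
    rintro _ ⟨u, rfl⟩
    rw [grad_cross, sigx_prod F hF0]
    refine add_mem (add_mem ?_ ?_) ?_ <;> refine Submodule.smul_mem _ _ ?_
    · exact Submodule.smul_mem _ _ (rho_mem_span_G1 h.ne_zero 0)
    · exact Submodule.subset_span ⟨Sum.inr 0, rfl⟩
    · exact Submodule.subset_span ⟨Sum.inr 1, rfl⟩
  · rw [Submodule.span_le]
    rintro _ ⟨j | t, rfl⟩
    · exact Submodule.mem_sup_left (Submodule.subset_span ⟨_, rfl⟩)
    · refine Submodule.mem_sup_right ?_
      fin_cases t
      · exact ⟨![0, 1, 0], by simp [grad_cross, G1]⟩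
      · exact ⟨![0, 0, 1], by simp [grad_cross, G1]⟩

lemma constantCoeff_eq_zero_of_sum_smul_G1_eq_zero (hl : ∀ j ≠ 0, 2 ≤ e j)
    {q : Fin (n + 1 - 1) ⊕ Fin 2 → S} (hq : ∑ i, q i • G1 F i = 0) (i) :
    constantCoeff (q i) = 0 := by
  rw [sum_smul_G1] at hq
  have constantCoeff_grad {t : Fin 3} (ht : t ≠ 0) (j) : constantCoeff (grad (F j) t) = 0 := by
    by_cases hj : j = 0
    · rw [hj, hF0, grad, pderiv_X_of_ne ht.symm, map_zero]
    · exact h.constantCoeff_grad (hl j hj) t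
  rcases i with i | i
  · simpa using h.constantCoeff_rho_coeff_eq_zero hq (Fin.snoc_last ..) (Fin.castSucc i)
  · fin_cases i
    · exact h.constantCoeff_cross_coeff_eq_zero hq (constantCoeff_grad (t := 1) (by decide))
    · exact h.constantCoeff_cross_coeff_eq_zero hq (constantCoeff_grad (t := 2) (by decide))

end Line

end SmoothNodalCurves

theorem caseL1_minimal_generators_general {n : ℕ} {F : Fin (n + 1) → S} {e : Fin (n + 1) → ℕ}
    (h : IsSmoothNodal F e) (hF0 : F 0 = X 0) (hl : ∀ j ≠ 0, 2 ≤ e j) :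
    D0 (∏ i, F i) = Submodule.span S (Set.range (G1 F)) ∧
    (∀ i, G1 F i ∉ Submodule.span S (G1 F '' {i}ᶜ)) ∧
    ∀ T : Finset (Fin 3 → S),
      Submodule.span S (T : Set (Fin 3 → S)) = D0 (∏ i, F i) → n + 1 + 1 ≤ T.card := by
  have generates := D0_prod_eq_span_G1 h hF0
  have relations (q : Fin (n + 1 - 1) ⊕ Fin 2 → S) (hq : ∑ i, q i • G1 F i = 0) :
      ∀ i, constantCoeff (q i) = 0 :=
    constantCoeff_eq_zero_of_sum_smul_G1_eq_zero h hF0 hl hq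
  refine ⟨generates, notMem_span_of_relations relations, fun T hT => ?_⟩
  calc n + 1 + 1 = Fintype.card (Fin (n + 1 - 1) ⊕ Fin 2) := by simp
    _ ≤ T.card := card_le_card_of_relations relations (hT.trans generates)

/-- if `ℓ(C) = 1` with `f_1 = x` (so `e_1 = 1` and `e_j ≥ 2` for `j ≥ 2`),
then `D₀(f)` is generated by `G = {ρ_1, …, ρ_{m−1}, σ^y, σ^z}`, this generating set is
minimal, and every generating set of `D₀(f)` has at least `m + 1` elements, so `C` is an
`(m+1)`-syzygy curve with exponents `d_1 = ⋯ = d_{m−1} = d−2`, `d_m = d_{m+1} = d−1`. -/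
theorem caseL1_minimal_generators
    (m : ℕ) (hm : 4 ≤ m) (F : Fin m → S) (e : Fin m → ℕ)
    (he : ∀ j, 1 ≤ e j)
    (hhom : ∀ j, (F j).IsHomogeneous (e j))
    (hsmooth : ∀ j, ∀ p : Fin 3 → ℂ,
      (∀ t, eval p (pderiv t (F j)) = 0) → p = 0)
    (hnc : ∀ i j : Fin m, i ≠ j → ∀ p : Fin 3 → ℂ, p ≠ 0 →
      eval p (F i) = 0 → eval p (F j) = 0 →
      LinearIndependent ℂ
        ![fun t => eval p (pderiv t (F i)), fun t => eval p (pderiv t (F j))])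
    (htriple : ∀ i j k : Fin m, i ≠ j → i ≠ k → j ≠ k → ∀ p : Fin 3 → ℂ, p ≠ 0 →
      ¬(eval p (F i) = 0 ∧ eval p (F j) = 0 ∧ eval p (F k) = 0))
    (hF1 : F ⟨0, by omega⟩ = X 0) (he1 : e ⟨0, by omega⟩ = 1)
    (hl1 : ∀ j : Fin m, 1 ≤ (j : ℕ) → 2 ≤ e j) :
    D0 (∏ i, F i) = Submodule.span S (Set.range (G1 F)) ∧
    (∀ i : Fin (m - 1) ⊕ Fin 2, G1 F i ∉ Submodule.span S (G1 F '' {i}ᶜ)) ∧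
    (∀ T : Finset (Fin 3 → S),
      Submodule.span S (T : Set (Fin 3 → S)) = D0 (∏ i, F i) → m + 1 ≤ T.card) := by
  obtain ⟨n, rfl⟩ : ∃ n, m = n + 1 := ⟨m - 1, by omega⟩
  exact caseL1_minimal_generators_general ⟨hhom, hsmooth, hnc, htriple⟩ hF1 fun j hj =>
    hl1 j (Nat.one_le_iff_ne_zero.2 (Fin.val_ne_zero_iff.2 hj))
end
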